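/- Let n and b be natural numbers with n ≥ 2, b even and b ≥ 2, and write s_i = b^(n+i) + 1. Then Ap(SC⁺(b,n), s_0) = { t_1·s_1 + t_2·s_2 + ⋯ + t_n·s_n : (t_1,…,t_n) ∈ RC_b(n) }. -/

import Mathlib

/-- The Cunningham numerical semigroup: the additive submonoid of ℕ generated by
`{b^(n+i) + 1 : i ∈ ℕ}`. -/
def cunninghamSemigroup (b n : ℕ) : AddSubmonoid ℕ :=
  AddSubmonoid.closure {m : ℕ | ∃ i : ℕ, m = b ^ (n + i) + 1}

/-- `RC_b(n)`: tuples `(t_1,…,t_n)` with entries in `{0,…,b}` (encoded as functions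
`ℕ → ℕ` supported on `{1,…,n}`) such that: if `t_i = b` then `t_j = 0` for all `j < i`;
`t_n ≤ b−1`; and if `t_n = b−1` then `t_1 ≤ 1` and `t_i = 0` for every index
`i ∉ {1, n}`. -/
def RCb (b n : ℕ) (t : ℕ → ℕ) : Prop :=
  (∀ j, t j ≤ b) ∧
  (∀ j, j ∉ Finset.Icc 1 n → t j = 0) ∧
  (∀ i, t i = b → ∀ j < i, t j = 0) ∧
  t n ≤ b - 1 ∧
  (t n = b - 1 → t 1 ≤ 1 ∧ ∀ i, i ≠ 1 → i ≠ n → t i = 0)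

/-- Repunits in base `b`. -/
def rpu (b : ℕ) : ℕ → ℕ
  | 0 => 0
  | i + 1 => b * rpu b i + 1

/-- Greedy number of repunits `r_1,…,r_m` needed to write `K`. -/
def grd (b : ℕ) : ℕ → ℕ → ℕ
  | 0, _ => 0
  | m + 1, K => K / rpu b (m + 1) + grd b m (K % rpu b (m + 1))

/-- `K` is a sum of exactly `T` repunits (including `r_0 = 0`). -/
inductive Rpt (b : ℕ) : ℕ → ℕ → Prop
  | zero : Rpt b 0 0
  | step (i K T : ℕ) : Rpt b K T → Rpt b (rpu b i + K) (T + 1)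

lemma rpu_pos (b m : ℕ) : 0 < rpu b (m + 1) := by simp [rpu]

lemma rpu_pow (c i : ℕ) : c * rpu (c + 1) i + 1 = (c + 1) ^ i := by
  induction i with
  | zero => simp [rpu]
  | succ i ih => rw [pow_succ, ← ih, rpu]; ring

lemma rpu_mono {b : ℕ} (hb : 1 ≤ b) : Monotone (rpu b) := by
  apply monotone_nat_of_le_succ
  intro i
  rw [rpu]
  nlinarith

lemma grd_zero (b m : ℕ) : grd b m 0 = 0 := by
  induction m with
  | zero => rfl
  | succ m ih => simp [grd, ih]

lemma grd_add_mul (b m q K : ℕ) :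
    grd b (m + 1) (q * rpu b (m + 1) + K) = q + grd b (m + 1) K := by
  have h := rpu_pos b m
  simp only [grd]
  rw [add_comm (q * _), Nat.add_mul_div_right _ _ h, Nat.add_mul_mod_self_right]
  ring

lemma grd_lt (b m K : ℕ) (h : K < rpu b (m + 1)) : grd b (m + 1) K = grd b m K := by
  simp only [grd]
  rw [Nat.div_eq_of_lt h, Nat.mod_eq_of_lt h, zero_add]

lemma grd_top (b m : ℕ) : grd b m (b * rpu b m) ≤ b := by
  cases m with
  | zero => simp [grd]
  | succ m =>
    have := grd_add_mul b m b 0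
    rw [grd_zero] at this
    simpa using this.le

/-- Lemma A. -/
lemma grd_pred (c m K : ℕ) : grd (c + 1) m K ≤ grd (c + 1) m (K + 1) + c := by
  induction m generalizing K with
  | zero => simp [grd]
  | succ m ih =>
    set R := rpu (c + 1) (m + 1) with hR
    have hpos : 0 < R := rpu_pos _ _
    have hdm := Nat.div_add_mod' (K + 1) R
    have hlt := Nat.mod_lt (K + 1) hpos
    set q := (K + 1) / R
    set ρ := (K + 1) % R
    rcases Nat.eq_zero_or_pos ρ with h0 | h0
    · rw [h0] at hdm
      obtain ⟨q', hq'⟩ : ∃ q', q = q' + 1 := by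
        rcases Nat.eq_zero_or_pos q with h | h
        · rw [h] at hdm; omega
        · exact ⟨q - 1, by omega⟩
      have hR2 : R = (c + 1) * rpu (c + 1) m + 1 := rfl
      have hK : K = q' * R + (c + 1) * rpu (c + 1) m := by
        rw [hq'] at hdm
        have : (q' + 1) * R = q' * R + R := by ring
        omega
      have e1 : grd (c + 1) (m + 1) K = q' + grd (c + 1) m ((c + 1) * rpu (c + 1) m) := by
        rw [hK, grd_add_mul, grd_lt]
        simp [rpu]
      have e2 : grd (c + 1) (m + 1) (K + 1) = q := by
        rw [← hdm, grd_add_mul, grd_zero]; rfl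
      have := grd_top (c + 1) m
      omega
    · obtain ⟨σ, hσ⟩ : ∃ σ, ρ = σ + 1 := ⟨ρ - 1, by omega⟩
      have hK : K = q * R + σ := by omega
      have e1 : grd (c + 1) (m + 1) K = q + grd (c + 1) m σ := by
        conv_lhs => rw [hK]
        rw [grd_add_mul, grd_lt]
        omega
      have e2 : grd (c + 1) (m + 1) (K + 1) = q + grd (c + 1) m (σ + 1) := by
        conv_lhs => rw [← hdm, hσ]
        rw [grd_add_mul, grd_lt]
        omega
      have := ih σ
      omega

lemma grd_step (c m i K : ℕ) (hi : i ≤ m) :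
    grd (c + 1) m (rpu (c + 1) i + K) ≤ grd (c + 1) m K + 1 := by
  induction m generalizing K i with
  | zero => simp [grd]
  | succ m ih =>
    rcases Nat.eq_or_lt_of_le hi with h | h
    · subst h
      have := grd_add_mul (c + 1) m 1 K
      rw [one_mul] at this
      omega
    · have him : i ≤ m := by omega
      set R := rpu (c + 1) (m + 1) with hR
      have hR2 : R = (c + 1) * rpu (c + 1) m + 1 := rfl
      have hpos : 0 < R := rpu_pos _ _
      have hdm := Nat.div_add_mod' K R
      have hlt := Nat.mod_lt K hpos
      set q := K / R
      set ρ := K % R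
      have hir : rpu (c + 1) i ≤ R := rpu_mono (by omega) hi
      have e1 : grd (c + 1) (m + 1) K = q + grd (c + 1) m ρ := by
        conv_lhs => rw [← hdm]
        rw [grd_add_mul, grd_lt]
        omega
      have hI := ih i ρ him
      by_cases hc : rpu (c + 1) i + ρ < R
      · have e2 : grd (c + 1) (m + 1) (rpu (c + 1) i + K)
            = q + grd (c + 1) m (rpu (c + 1) i + ρ) := by
          have : rpu (c + 1) i + K = q * R + (rpu (c + 1) i + ρ) := by omega
          rw [this, grd_add_mul, grd_lt]
          omega
        omega
      · obtain ⟨σ, hσ⟩ : ∃ σ, rpu (c + 1) i + ρ = R + σ := ⟨rpu (c + 1) i + ρ - R, by omega⟩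
        have e2 : grd (c + 1) (m + 1) (rpu (c + 1) i + K) = (q + 1) + grd (c + 1) m σ := by
          have h1 : (q + 1) * R = q * R + R := by ring
          have : rpu (c + 1) i + K = (q + 1) * R + σ := by omega
          rw [this, grd_add_mul, grd_lt]
          omega
        cases m with
        | zero =>
          have : i = 0 := by omega
          subst this
          simp only [rpu] at hσ
          omega
        | succ m =>
          have h1 : rpu (c + 1) i + ρ = (c + 1) * rpu (c + 1) (m + 1) + (σ + 1) := by omega
          rw [h1, grd_add_mul] at hI
          have := grd_pred c (m + 1) σ
          omega

lemma Rpt.opt {c n K T : ℕ} (h : Rpt (c + 1) K T) (hK : K < rpu (c + 1) (n + 1)) :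
    grd (c + 1) n K ≤ T := by
  induction h with
  | zero => rw [grd_zero]
  | step i K T h ih =>
    have hi : i ≤ n := by
      by_contra hcon
      have := rpu_mono (b := c + 1) (by omega) (show n + 1 ≤ i by omega)
      omega
    have := grd_step c n i K hi
    have := ih (by omega)
    omega

lemma Rpt.mono {b K T U : ℕ} (h : Rpt b K T) (hU : T ≤ U) : Rpt b K U := by
  obtain ⟨d, rfl⟩ := Nat.exists_eq_add_of_le hU
  clear hU
  induction d with
  | zero => exact h
  | succ d ih => simpa [rpu, add_assoc] using Rpt.step 0 _ _ ih

lemma Rpt.mul {b K T : ℕ} (h : Rpt b K T) (i q : ℕ) : Rpt b (q * rpu b i + K) (q + T) := by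
  induction q with
  | zero => simpa using h
  | succ q ih =>
    have := Rpt.step i _ _ ih
    convert this using 1 <;> ring

lemma Rpt.grd (b m K : ℕ) (hK : K < rpu b (m + 1)) : Rpt b K (grd b m K) := by
  induction m generalizing K with
  | zero =>
    have : K = 0 := by simp [rpu] at hK; omega
    subst this
    exact Rpt.zero
  | succ m ih =>
    have := (ih (K % rpu b (m + 1)) (Nat.mod_lt _ (rpu_pos b m))).mul (m + 1) (K / rpu b (m + 1))
    rwa [Nat.div_add_mod'] at this

lemma mem_iff (c n x : ℕ) : x ∈ cunninghamSemigroup (c + 1) n ↔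
    ∃ K T, Rpt (c + 1) K T ∧ x = (c + 1) ^ n * c * K + ((c + 1) ^ n + 1) * T := by
  have key : ∀ i, (c + 1) ^ (n + i) + 1
      = (c + 1) ^ n * c * rpu (c + 1) i + ((c + 1) ^ n + 1) := by
    intro i
    rw [pow_add, ← rpu_pow c i]; ring
  constructor
  · intro h
    unfold cunninghamSemigroup at h
    induction h using AddSubmonoid.closure_induction_left with
    | zero => exact ⟨0, 0, Rpt.zero, by simp⟩
    | add_left x hx y hy ih =>
      obtain ⟨i, rfl⟩ := hx
      obtain ⟨K, T, h, rfl⟩ := ih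
      refine ⟨_, _, Rpt.step i K T h, ?_⟩
      rw [key]; ring
  · rintro ⟨K, T, h, rfl⟩
    induction h with
    | zero => simp
    | step i K T h ih =>
      have h1 : (c + 1) ^ (n + i) + 1 ∈ cunninghamSemigroup (c + 1) n :=
        AddSubmonoid.subset_closure ⟨i, rfl⟩
      have := add_mem h1 ih
      convert this using 1
      rw [key]; ring

/-- Apéry elements through the greedy function. -/
lemma apery_iff (c n x : ℕ) (hc : 1 ≤ c) (hcop : Nat.Coprime ((c + 1) ^ n + 1) c) (hn : 2 ≤ n) :
    (x ∈ cunninghamSemigroup (c + 1) n ∧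
        ¬ ∃ t ∈ cunninghamSemigroup (c + 1) n, t + ((c + 1) ^ n + 1) = x) ↔
    ∃ k, k ≤ (c + 1) ^ n ∧
      x = (c + 1) ^ n * c * k + ((c + 1) ^ n + 1) * grd (c + 1) n k := by
  have hbd : ∀ k, k ≤ (c + 1) ^ n → k < rpu (c + 1) (n + 1) := by
    intro k hk
    have h1 := rpu_pow c n
    have h2 := rpu_mono (b := c + 1) (by omega) (show 1 ≤ n by omega)
    have h3 : rpu (c + 1) 1 = 1 := by simp [rpu]
    rw [rpu]
    nlinarith
  have hself : ∀ k, Rpt (c + 1) k k := by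
    intro k
    simpa [rpu] using (Rpt.zero (b := c + 1)).mul 1 k
  have hgle : ∀ k, k ≤ (c + 1) ^ n → grd (c + 1) n k ≤ (c + 1) ^ n * c := by
    intro k hk
    have := (hself k).opt (hbd k hk)
    nlinarith
  simp only [mem_iff]
  set B := (c + 1) ^ n with hB
  constructor
  · rintro ⟨⟨K, T, hR, rfl⟩, hno⟩
    have hdm := Nat.div_add_mod' K (B + 1)
    have hlt := Nat.mod_lt K (show 0 < B + 1 by omega)
    set q := K / (B + 1)
    set k := K % (B + 1)
    have hk : k ≤ B := by omega
    have hx : B * c * K + (B + 1) * T = B * c * k + (B + 1) * (T + q * (B * c)) := by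
      rw [← hdm]; ring
    refine ⟨k, hk, ?_⟩
    rw [hx] at hno ⊢
    have hge : grd (c + 1) n k ≤ T + q * (B * c) := by
      rcases Nat.eq_zero_or_pos q with h | h
      · rw [h] at hdm
        have hkK : k = K := by omega
        have := hR.opt (hbd K (by omega))
        rw [hkK]; omega
      · have := hgle k hk
        nlinarith
    rcases Nat.eq_or_lt_of_le hge with h | h
    · rw [h]
    · exfalso
      obtain ⟨U, hU⟩ : ∃ U, T + q * (B * c) = U + 1 := ⟨T + q * (B * c) - 1, by omega⟩
      apply hno
      refine ⟨B * c * k + (B + 1) * U, ⟨k, U, (Rpt.grd _ _ _ (hbd k hk)).mono (by omega), rfl⟩, ?_⟩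
      rw [hU]; ring
  · rintro ⟨k, hk, rfl⟩
    refine ⟨⟨k, _, Rpt.grd _ _ _ (hbd k hk), rfl⟩, ?_⟩
    rintro ⟨t, ⟨K, T, hR, rfl⟩, ht⟩
    have hmod : B * c * K ≡ B * c * k [MOD (B + 1)] := by
      have h1 : B * c * K + (B + 1) * (T + 1) = B * c * k + (B + 1) * grd (c + 1) n k := by
        rw [← ht]; ring
      have h2 : (B * c * K + (B + 1) * (T + 1)) % (B + 1)
        = (B * c * k + (B + 1) * grd (c + 1) n k) % (B + 1) := by rw [h1]
      simpa [Nat.ModEq] using h2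
    have hcopB : Nat.gcd (B + 1) (B * c) = 1 := by
      apply Nat.Coprime.mul_right _ hcop
      simp
    have hKk := Nat.ModEq.cancel_left_of_coprime hcopB hmod
    have hkm : K % (B + 1) = k := by
      rw [hKk, Nat.mod_eq_of_lt (by omega)]
    have hdm := Nat.div_add_mod' K (B + 1)
    rw [hkm] at hdm
    rcases Nat.eq_zero_or_pos (K / (B + 1)) with h | h
    · rw [h] at hdm
      have hkK : K = k := by omega
      subst hkK
      have := hR.opt (hbd K hk)
      nlinarith
    · have h1 := hgle k hk
      have h2 : k + (B + 1) ≤ K := by nlinarith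
      have h3 : B * c * (k + (B + 1)) ≤ B * c * K := Nat.mul_le_mul_left _ h2
      nlinarith

lemma tuple_grd (b : ℕ) (t : ℕ → ℕ) (h1 : ∀ j, t j ≤ b)
    (h2 : ∀ i, t i = b → ∀ j < i, t j = 0) (m : ℕ) :
    ∑ j ∈ Finset.Icc 1 m, t j * rpu b j < rpu b (m + 1) ∧
    grd b m (∑ j ∈ Finset.Icc 1 m, t j * rpu b j) = ∑ j ∈ Finset.Icc 1 m, t j := by
  induction m with
  | zero => simp [grd, rpu]
  | succ m ih =>
    rw [Finset.sum_Icc_succ_top (by omega), Finset.sum_Icc_succ_top (by omega)]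
    obtain ⟨i1, i2⟩ := ih
    constructor
    · rcases Nat.eq_or_lt_of_le (h1 (m + 1)) with h | h
      · have : ∑ j ∈ Finset.Icc 1 m, t j * rpu b j = 0 := by
          apply Finset.sum_eq_zero
          intro j hj
          rw [Finset.mem_Icc] at hj
          rw [h2 _ h j (by omega), zero_mul]
        rw [this, h, rpu.eq_2 b (m + 1)]
        omega
      · rw [rpu.eq_2 b (m + 1)]
        have : (t (m + 1) + 1) * rpu b (m + 1) ≤ b * rpu b (m + 1) := Nat.mul_le_mul_right _ h
        nlinarith
    · rw [add_comm (∑ j ∈ Finset.Icc 1 m, t j * rpu b j), grd_add_mul, grd_lt _ _ _ i1, i2, add_comm]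

lemma tuple_exists (b : ℕ) (hb : 1 ≤ b) (m K : ℕ) (hK : K < rpu b (m + 1)) :
    ∃ t : ℕ → ℕ, (∀ j, t j ≤ b) ∧ (∀ j, j ∉ Finset.Icc 1 m → t j = 0) ∧
    (∀ i, t i = b → ∀ j < i, t j = 0) ∧ ∑ j ∈ Finset.Icc 1 m, t j * rpu b j = K := by
  induction m generalizing K with
  | zero =>
    refine ⟨fun _ => 0, by simp, by simp, by simp, ?_⟩
    simp [rpu] at hK ⊢
    omega
  | succ m ih =>
    have hpos := rpu_pos b m
    have hlt := Nat.mod_lt K hpos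
    have hdm := Nat.div_add_mod' K (rpu b (m + 1))
    rw [rpu.eq_2 b (m + 1)] at hK
    have hq : K / rpu b (m + 1) ≤ b := by
      by_contra hcon
      have : (b + 1) * rpu b (m + 1) ≤ K / rpu b (m + 1) * rpu b (m + 1) :=
        Nat.mul_le_mul_right _ (by omega)
      rw [add_mul] at this
      omega
    have hqb : K / rpu b (m + 1) = b → K % rpu b (m + 1) = 0 := by
      intro h
      rw [h] at hdm
      omega
    obtain ⟨t, a1, a2, a3, a4⟩ := ih _ hlt
    set q := K / rpu b (m + 1)
    have hz : ∀ j ∈ Finset.Icc 1 m, Function.update t (m + 1) q j = t j := by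
      intro j hj
      rw [Finset.mem_Icc] at hj
      rw [Function.update_of_ne (by omega)]
    refine ⟨Function.update t (m + 1) q, ?_, ?_, ?_, ?_⟩
    · intro j
      by_cases hj : j = m + 1
      · subst hj; simpa using hq
      · rw [Function.update_of_ne hj]; exact a1 j
    · intro j hj
      rw [Finset.mem_Icc] at hj
      have : j ≠ m + 1 := by omega
      rw [Function.update_of_ne this]
      apply a2
      rw [Finset.mem_Icc]; omega
    · intro i hi j hj
      by_cases him : i = m + 1
      · subst him
        rw [Function.update_self] at hi
        rw [Function.update_of_ne (by omega)]
        by_cases hjm : j ∈ Finset.Icc 1 m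
        · rw [hqb hi, Finset.sum_eq_zero_iff] at a4
          have h0 := a4 j hjm
          rw [Finset.mem_Icc] at hjm
          obtain ⟨j', rfl⟩ : ∃ j', j = j' + 1 := ⟨j - 1, by omega⟩
          have := rpu_pos b j'
          rcases Nat.mul_eq_zero.mp h0 with h | h
          · exact h
          · omega
        · exact a2 j hjm
      · rw [Function.update_of_ne him] at hi
        have hi1 : i ∈ Finset.Icc 1 m := by
          by_contra hcon
          have := a2 i hcon
          omega
        rw [Finset.mem_Icc] at hi1
        rw [Function.update_of_ne (by omega)]
        exact a3 i hi j hj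
    · rw [Finset.sum_Icc_succ_top (by omega), Function.update_self,
        Finset.sum_congr rfl (fun j hj => by rw [hz j hj]), a4]
      omega

lemma rcb_le (c m : ℕ) (t : ℕ → ℕ) (h : RCb (c + 1) (m + 2) t) :
    ∑ j ∈ Finset.Icc 1 (m + 2), t j * rpu (c + 1) j ≤ (c + 1) ^ (m + 2) := by
  obtain ⟨h1, h2, h3, h4, h5⟩ := h
  simp only [Nat.add_sub_cancel] at h4 h5
  have hp := rpu_pow c (m + 2)
  rw [Finset.sum_Icc_succ_top (by omega)]
  rcases Nat.eq_or_lt_of_le h4 with h | h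
  · obtain ⟨h6, h7⟩ := h5 h
    have : ∑ j ∈ Finset.Icc 1 (m + 1), t j * rpu (c + 1) j = t 1 * rpu (c + 1) 1 := by
      apply Finset.sum_eq_single_of_mem 1 (by simp)
      intro j hj hj1
      rw [Finset.mem_Icc] at hj
      rw [h7 j hj1 (by omega), zero_mul]
    have hr : rpu (c + 1) 1 = 1 := by simp [rpu]
    rw [this, hr, show m + 1 + 1 = m + 2 from rfl, h]
    omega
  · have := (tuple_grd (c + 1) t h1 h3 (m + 1)).1
    have h8 : (t (m + 2) + 1) * rpu (c + 1) (m + 2) ≤ c * rpu (c + 1) (m + 2) :=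
      Nat.mul_le_mul_right _ h
    rw [show m + 1 + 1 = m + 2 from rfl] at *
    nlinarith

lemma rcb_exists (c m k : ℕ) (hc : 1 ≤ c) (hk : k ≤ (c + 1) ^ (m + 2)) :
    ∃ t, RCb (c + 1) (m + 2) t ∧ ∑ j ∈ Finset.Icc 1 (m + 2), t j * rpu (c + 1) j = k := by
  have hp := rpu_pow c (m + 2)
  have hr2 : ∀ j, 2 ≤ j → 2 ≤ rpu (c + 1) j := by
    intro j hj
    have := rpu_mono (b := c + 1) (by omega) hj
    simp [rpu] at this
    omega
  have hr := hr2 (m + 2) (by omega)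
  obtain ⟨t, a1, a2, a3, a4⟩ := tuple_exists (c + 1) (by omega) (m + 2) k (by
    rw [rpu.eq_2 _ (m + 2)]; nlinarith)
  have a4' := a4
  rw [Finset.sum_Icc_succ_top (by omega), show m + 1 + 1 = m + 2 from rfl] at a4'
  refine ⟨t, ⟨a1, a2, a3, ?_, ?_⟩, a4⟩
  · simp only [Nat.add_sub_cancel]
    by_contra hcon
    have : (c + 1) * rpu (c + 1) (m + 2) ≤ t (m + 2) * rpu (c + 1) (m + 2) :=
      Nat.mul_le_mul_right _ (by omega)
    rw [add_mul] at this
    omega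
  · simp only [Nat.add_sub_cancel]
    intro htn
    rw [htn] at a4'
    have hle : ∑ j ∈ Finset.Icc 1 (m + 1), t j * rpu (c + 1) j ≤ 1 := by omega
    have hone : ∀ j ∈ Finset.Icc 1 (m + 1), t j * rpu (c + 1) j ≤ 1 := fun j hj =>
      (Finset.single_le_sum (f := fun j => t j * rpu (c + 1) j)
        (fun _ _ => Nat.zero_le _) hj).trans hle
    constructor
    · simpa [rpu] using hone 1 (by simp)
    · intro i hi1 hi2
      by_cases him : i ∈ Finset.Icc 1 (m + 2)
      · rw [Finset.mem_Icc] at him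
        have h1 := hone i (by rw [Finset.mem_Icc]; omega)
        have h2 := hr2 i (by omega)
        by_contra h3
        have : 1 ≤ t i := by omega
        nlinarith
      · exact a2 i him

theorem cunningham_apery_set (n b : ℕ) (hn : 2 ≤ n) (hb : 2 ≤ b) (hbe : Even b) :
    {s : ℕ | s ∈ cunninghamSemigroup b n ∧
        ¬ ∃ t ∈ cunninghamSemigroup b n, t + (b ^ n + 1) = s}
      = {x : ℕ | ∃ t : ℕ → ℕ, RCb b n t ∧
          x = ∑ j ∈ Finset.Icc 1 n, t j * (b ^ (n + j) + 1)} := by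
  obtain ⟨c, rfl⟩ : ∃ c, b = c + 1 := ⟨b - 1, by omega⟩
  obtain ⟨m, rfl⟩ : ∃ m, n = m + 2 := ⟨n - 2, by omega⟩
  have hcop : Nat.Coprime ((c + 1) ^ (m + 2) + 1) c := by
    rw [← rpu_pow c (m + 2), add_assoc, mul_comm c, Nat.coprime_mul_right_add_left]
    have : Odd c := by
      rcases Nat.even_or_odd c with h | h
      · exact absurd hbe (by simpa [Nat.even_add_one] using h)
      · exact h
    exact (Nat.coprime_two_left).mpr this
  have hval : ∀ t, RCb (c + 1) (m + 2) t →
      ∑ j ∈ Finset.Icc 1 (m + 2), t j * ((c + 1) ^ (m + 2 + j) + 1)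
      = (c + 1) ^ (m + 2) * c * (∑ j ∈ Finset.Icc 1 (m + 2), t j * rpu (c + 1) j)
        + ((c + 1) ^ (m + 2) + 1) *
          grd (c + 1) (m + 2) (∑ j ∈ Finset.Icc 1 (m + 2), t j * rpu (c + 1) j) := by
    intro t ht
    rw [(tuple_grd (c + 1) t ht.1 ht.2.2.1 (m + 2)).2, Finset.mul_sum, Finset.mul_sum,
      ← Finset.sum_add_distrib]
    apply Finset.sum_congr rfl
    intro j _
    rw [pow_add _ (m + 2) j, ← rpu_pow c j]
    ring
  ext x
  simp only [Set.mem_setOf_eq]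
  rw [apery_iff c (m + 2) x (by omega) hcop hn]
  constructor
  · rintro ⟨k, hk, rfl⟩
    obtain ⟨t, ht, rfl⟩ := rcb_exists c m k (by omega) hk
    exact ⟨t, ht, (hval t ht).symm⟩
  · rintro ⟨t, ht, rfl⟩
    exact ⟨_, rcb_le c m t ht, hval t ht⟩
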